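/- Let G(X) = P(X)/(X₁²+⋯+Xₙ²+1)^{r/2} with P ∈ ℂ[X₁,…,Xₙ] and r ∈ ℕ₀, and let a ∈ ℝⁿ and u ∈ ℤⁿ be such that d(a·u, ℤ) := inf_{m∈ℤ} |a·u − m| > 0. Define F₀(G;a;s) := Σ'_{k∈ℤⁿ} (G(k)/|k|^s) e^{2πi k·a} and F₁(G;a;s) := Σ_{k∈ℤⁿ} (G(k)/(|k|²+1)^{s/2}) e^{2πi k·a}. Then for every N ∈ ℕ and each i ∈ {0,1}, there exist positive constants C_i, B_i, A_i depending only on G, N and u (and not on a), such that s ↦ F_i(G;a;s) extends holomorphically to the half-plane {Re(s) > −N} and satisfies there |F_i(G;a;s)| ≤ C_i (1+|s|)^{B_i} · d(a·u, ℤ)^{−A_i}. -/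

import Mathlib

open Filter Topology

noncomputable section

/-- Euclidean norm of an integer vector `k ∈ ℤⁿ`. -/
def znorm {n : ℕ} (k : Fin n → ℤ) : ℝ := Real.sqrt (∑ i, ((k i : ℝ)) ^ 2)

/-- Distance of a real number to the integers, `d(t, ℤ) = inf_{m∈ℤ} |t − m|`. -/
def distInt (t : ℝ) : ℝ := ⨅ m : ℤ, |t - (m : ℝ)|

/-- The value `G(k) = P(k)/(|k|²+1)^{r/2}`. -/
def Gval {n : ℕ} (P : MvPolynomial (Fin n) ℂ) (r : ℕ) (k : Fin n → ℤ) : ℂ :=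
  MvPolynomial.eval (fun i => ((k i : ℤ) : ℂ)) P /
    (((∑ i, ((k i : ℝ)) ^ 2 + 1 : ℝ) ^ ((r : ℝ) / 2) : ℝ) : ℂ)

/-- Term of `F₀(G;a;s) = Σ'_{k∈ℤⁿ} (G(k)/|k|^s) e^{2πi k·a}` (term at `k = 0` omitted). -/
def F0Term {n : ℕ} (P : MvPolynomial (Fin n) ℂ) (r : ℕ) (a : Fin n → ℝ) (s : ℂ)
    (k : Fin n → ℤ) : ℂ :=
  if k = 0 then 0 else
    Gval P r k / ((znorm k : ℂ) ^ s) *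
      Complex.exp (2 * (Real.pi : ℂ) * Complex.I * ((∑ i, (k i : ℝ) * a i : ℝ) : ℂ))

/-- Term of `F₁(G;a;s) = Σ_{k∈ℤⁿ} (G(k)/(|k|²+1)^{s/2}) e^{2πi k·a}`. -/
def F1Term {n : ℕ} (P : MvPolynomial (Fin n) ℂ) (r : ℕ) (a : Fin n → ℝ) (s : ℂ)
    (k : Fin n → ℤ) : ℂ :=
  Gval P r k / (((∑ i, ((k i : ℝ)) ^ 2 + 1 : ℝ) : ℂ) ^ (s / 2)) *
    Complex.exp (2 * (Real.pi : ℂ) * Complex.I * ((∑ i, (k i : ℝ) * a i : ℝ) : ℂ))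

/-!
Fix a direction `u ∈ ℤⁿ` and write `χ(k) = exp (2πi k·a)`. Multiplying `∑ c(k) χ(k)` by
`(χ(-u) - 1) ^ M` moves `M` differences in the direction `u` onto the coefficients. For
`c(k) = G(k) / (|k|² + ε) ^ (s / 2)` the map `m ↦ c(k + m u)` extends holomorphically to a complex
disc of radius comparable to `(1 + |k|) / (1 + |s|)`, so by Cauchy's estimates each difference gains
a factor `(1 + |s|) / (1 + |k|)`. For `M` large in terms of `N` the differenced series therefore
converges on `re s > -N`, and the only trace of `a` in the bound is `|χ(u) - 1| ≥ 4 d(a·u, ℤ)`.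
-/

open Metric

section Holomorphy

variable {Γ E : Type*} [AddCommMonoid Γ] [NormedAddCommGroup E] [NormedSpace ℂ E]
  {u k : Γ} {f : Γ → E} {ρ K : ℝ}

/-- The sequence `m ↦ f (k + m • u)` is interpolated, as long as `m < ρ`, by a holomorphic function
bounded by `K` on the disc of radius `ρ` about the origin. -/
def HolomorphicAlong (u : Γ) (f : Γ → E) (k : Γ) (ρ K : ℝ) : Prop :=
  ∃ φ : ℂ → E, DifferentiableOn ℂ φ (ball 0 ρ) ∧ (∀ z ∈ ball 0 ρ, ‖φ z‖ ≤ K) ∧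
    ∀ m : ℕ, (m : ℝ) < ρ → φ m = f (k + m • u)

namespace HolomorphicAlong

theorem mono {ρ' K' : ℝ} (h : HolomorphicAlong u f k ρ K) (hρ : ρ' ≤ ρ) (hK : K ≤ K') :
    HolomorphicAlong u f k ρ' K' := by
  obtain ⟨φ, hφ, hφK, hφf⟩ := h
  exact ⟨φ, hφ.mono (ball_subset_ball hρ),
    fun z hz => (hφK z (ball_subset_ball hρ hz)).trans hK, fun m hm => hφf m (hm.trans_le hρ)⟩

theorem congr {g : Γ → E} (h : HolomorphicAlong u f k ρ K)
    (hfg : ∀ m : ℕ, (m : ℝ) < ρ → f (k + m • u) = g (k + m • u)) :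
    HolomorphicAlong u g k ρ K := by
  obtain ⟨φ, hφ, hφK, hφf⟩ := h
  exact ⟨φ, hφ, hφK, fun m hm => (hφf m hm).trans (hfg m hm)⟩

theorem of_radius_le_one (hρ : ρ ≤ 1) (hK : ‖f k‖ ≤ K) : HolomorphicAlong u f k ρ K := by
  refine ⟨fun _ => f k, differentiableOn_const _, fun _ _ => hK, fun m hm => ?_⟩
  obtain rfl : m = 0 := Nat.lt_one_iff.1 (by exact_mod_cast hm.trans_le hρ)
  rw [zero_nsmul, add_zero]

theorem norm_le (h : HolomorphicAlong u f k ρ K) (hρ : 0 < ρ) : ‖f k‖ ≤ K := by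
  obtain ⟨φ, -, hφK, hφf⟩ := h
  have hzero := hφf 0 (by exact_mod_cast hρ)
  rw [zero_nsmul, add_zero, Nat.cast_zero] at hzero
  exact hzero ▸ hφK 0 (mem_ball_self hρ)

theorem mul {f g : Γ → ℂ} {K' : ℝ} (hf : HolomorphicAlong u f k ρ K)
    (hg : HolomorphicAlong u g k ρ K') :
    HolomorphicAlong u (fun l => f l * g l) k ρ (K * K') := by
  obtain ⟨φ, hφ, hφK, hφf⟩ := hf
  obtain ⟨ψ, hψ, hψK, hψg⟩ := hg
  refine ⟨φ * ψ, hφ.mul hψ, fun z hz => ?_, fun m hm => ?_⟩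
  · rw [Pi.mul_apply, norm_mul]
    exact mul_le_mul (hφK z hz) (hψK z hz) (norm_nonneg _) ((norm_nonneg _).trans (hφK z hz))
  · rw [Pi.mul_apply, hφf m hm, hψg m hm]

protected theorem fwdDiff {δ : ℝ} (h : HolomorphicAlong u f k ρ K) (hδ : 0 < δ) :
    HolomorphicAlong u (fwdDiff u f) k (ρ - (δ + 1)) (K / δ) := by
  obtain ⟨φ, hφ, hφK, hφf⟩ := h
  have hdiff {w : ℂ} (hw : ‖w‖ < ρ) : DifferentiableAt ℂ φ w :=
    hφ.differentiableAt (isOpen_ball.mem_nhds (mem_ball_zero_iff.2 hw))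
  have hstep (z : ℂ) : ‖z + 1‖ ≤ ‖z‖ + 1 := by simpa using norm_add_le z 1
  have hderiv (w : ℂ) (hw : w ∈ ball 0 (ρ - δ)) : ‖deriv φ w‖ ≤ K / δ := by
    have hsub : closedBall w δ ⊆ ball 0 ρ :=
      closedBall_subset_ball' (by linarith [mem_ball.1 hw])
    refine Complex.norm_deriv_le_of_forall_mem_sphere_norm_le hδ ?_
      fun v hv => hφK v (hsub (sphere_subset_closedBall hv))
    exact (hφ.mono (closure_ball w hδ.ne' ▸ hsub)).diffContOnCl
  refine ⟨fwdDiff 1 φ, fun z hz => ?_, fun z hz => ?_, fun m hm => ?_⟩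
  · have hz' := mem_ball_zero_iff.1 hz
    have hshift : DifferentiableAt ℂ (fun w => φ (w + 1)) z :=
      (hdiff (by linarith [hstep z])).comp z (differentiableAt_id.add_const 1)
    exact (hshift.sub (hdiff (by linarith))).differentiableWithinAt
  · have hz' := mem_ball_zero_iff.1 hz
    have := (convex_ball (0 : ℂ) (ρ - δ)).norm_image_sub_le_of_norm_deriv_le (x := z) (y := z + 1)
      (fun w hw => hdiff (by linarith [mem_ball_zero_iff.1 hw])) hderiv
      (mem_ball_zero_iff.2 (by linarith)) (mem_ball_zero_iff.2 (by linarith [hstep z]))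
    rwa [add_sub_cancel_left, norm_one, mul_one] at this
  · have hsucc := hφf (m + 1) (by push_cast; linarith)
    rw [Nat.cast_succ, succ_nsmul, ← add_assoc] at hsucc
    rw [fwdDiff, fwdDiff, hsucc, hφf m (by linarith)]

theorem fwdDiff_iter {δ : ℝ} (h : HolomorphicAlong u f k ρ K) (hδ : 0 < δ) (j : ℕ) :
    HolomorphicAlong u ((fwdDiff u)^[j] f) k (ρ - j * (δ + 1)) (K / δ ^ j) := by
  induction j with
  | zero => simpa using h
  | succ j ih =>
    rw [Function.iterate_succ_apply', pow_succ, ← div_div]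
    exact (ih.fwdDiff hδ).mono (by push_cast; linarith) le_rfl

end HolomorphicAlong

theorem norm_fwdDiff_iter_le_of_le {Γ E : Type*} [AddCommMonoid Γ] [SeminormedAddCommGroup E]
    {u : Γ} {f : Γ → E} {g : Γ → ℝ} {c : ℝ} (hc : 0 ≤ c) (hf : ∀ k, ‖f k‖ ≤ g k)
    (hg : ∀ k, g (k + u) ≤ c * g k) (j : ℕ) (k : Γ) :
    ‖(fwdDiff u)^[j] f k‖ ≤ (c + 1) ^ j * g k := by
  induction j generalizing k with
  | zero => simpa using hf k
  | succ j ih =>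
    rw [Function.iterate_succ_apply']
    calc ‖(fwdDiff u)^[j] f (k + u) - (fwdDiff u)^[j] f k‖
        ≤ (c + 1) ^ j * g (k + u) + (c + 1) ^ j * g k :=
          (norm_sub_le _ _).trans (add_le_add (ih _) (ih _))
      _ ≤ (c + 1) ^ j * (c * g k) + (c + 1) ^ j * g k := by gcongr; exact hg k
      _ = (c + 1) ^ (j + 1) * g k := by ring

/-- On a large disc this is Cauchy's estimate with step `ρ / (2 (M + 1))`; on a small disc the
trivial bound already suffices. -/
theorem HolomorphicAlong.norm_fwdDiff_iter_le {g : Γ → ℝ} {c : ℝ}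
    (h : HolomorphicAlong u f k ρ (g k)) (hρ : 0 < ρ) (hc : 0 ≤ c) (hf : ∀ l, ‖f l‖ ≤ g l)
    (hg : ∀ l, g (l + u) ≤ c * g l) (M : ℕ) :
    ‖(fwdDiff u)^[M] f k‖ ≤ g k * (2 * (M + 1) * (c + 1) / ρ) ^ M := by
  have hgk : 0 ≤ g k := (norm_nonneg _).trans (hf k)
  rcases le_or_gt ρ (2 * (M + 1)) with hsmall | hlarge
  · refine (norm_fwdDiff_iter_le_of_le hc hf hg M k).trans ?_
    rw [mul_comm, mul_div_right_comm]
    gcongr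
    exact le_mul_of_one_le_left (by positivity) ((one_le_div hρ).2 hsmall)
  · have hδ : 1 < ρ / (2 * (M + 1)) := (one_lt_div (by positivity)).2 hlarge
    set δ := ρ / (2 * (M + 1)) with hδ_def
    have hρδ : ρ = 2 * (M + 1) * δ := by rw [hδ_def]; field_simp
    have hrad : 0 < ρ - M * (δ + 1) := by
      rw [hρδ]
      nlinarith [M.cast_nonneg (α := ℝ)]
    refine ((h.fwdDiff_iter (by positivity) M).norm_le hrad).trans ?_
    rw [div_eq_mul_inv, ← inv_pow, hδ_def, inv_div]
    have : 2 * ((M : ℝ) + 1) ≤ 2 * (M + 1) * (c + 1) :=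
      le_mul_of_one_le_right (by positivity) (by linarith)
    gcongr

/-- Writing `q (k + m • u) = q k * (1 + z)` with `‖z‖ ≤ θ ≤ 1 / 2`, the power is
`q k ^ w * (1 + z) ^ w`. -/
theorem HolomorphicAlong.ofReal_cpow {q : Γ → ℝ} {θ : ℝ} (hq : ∀ l, 0 < q l) (hθ : θ ≤ 1 / 2)
    (h : HolomorphicAlong u (fun l => ((q l / q k - 1 : ℝ) : ℂ)) k ρ θ) (w : ℂ) :
    HolomorphicAlong u (fun l => (q l : ℂ) ^ w) k ρ (q k ^ w.re * Real.exp (2 * ‖w‖ * θ)) := by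
  obtain ⟨φ, hφ, hφθ, hφq⟩ := h
  have hslit (z : ℂ) (hz : z ∈ ball 0 ρ) : 1 + φ z ∈ Complex.slitPlane :=
    Complex.mem_slitPlane_of_norm_lt_one ((hφθ z hz).trans_lt (by linarith))
  refine ⟨fun z => (q k : ℂ) ^ w * (1 + φ z) ^ w,
    ((hφ.const_add 1).cpow (differentiableOn_const w) hslit).const_mul _,
    fun z hz => ?_, fun m hm => ?_⟩
  · have hlog : ‖Complex.log (1 + φ z)‖ ≤ 2 * θ := by
      have := Complex.norm_log_one_add_half_le_self ((hφθ z hz).trans hθ)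
      linarith [hφθ z hz, norm_nonneg (φ z)]
    rw [norm_mul, Complex.norm_cpow_eq_rpow_re_of_pos (hq k),
      Complex.cpow_def_of_ne_zero (Complex.slitPlane_ne_zero (hslit z hz))]
    refine mul_le_mul_of_nonneg_left ?_ (Real.rpow_nonneg (hq k).le _)
    calc ‖Complex.exp (Complex.log (1 + φ z) * w)‖
        ≤ Real.exp ‖Complex.log (1 + φ z) * w‖ := Complex.norm_exp_le_exp_norm _
      _ ≤ Real.exp (2 * ‖w‖ * θ) := by
        rw [norm_mul, mul_comm 2, mul_assoc, mul_comm]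
        gcongr
  · have hratio : 1 + φ m = ((q (k + m • u) / q k : ℝ) : ℂ) := by
      rw [hφq m hm]
      push_cast
      ring
    beta_reduce
    rw [hratio, ← Complex.mul_cpow_ofReal_nonneg (hq k).le (div_pos (hq _) (hq k)).le,
      ← Complex.ofReal_mul, mul_div_cancel₀ _ (hq k).ne']

end Holomorphy

section SummationByParts

variable {Γ : Type*} [AddCommGroup Γ]

theorem hasSum_fwdDiff_iter_mul_addChar {f : Γ → ℂ} {χ : AddChar Γ Circle} {S : ℂ}
    (h : HasSum (fun k => f k * χ k) S) (u : Γ) (j : ℕ) :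
    HasSum (fun k => (fwdDiff u)^[j] f k * χ k) (((χ (-u) : ℂ) - 1) ^ j * S) := by
  induction j with
  | zero => simpa using h
  | succ j ih =>
    have hshift := ((Equiv.addRight u).hasSum_iff.2 ih).mul_left (χ (-u) : ℂ)
    rw [pow_succ', mul_assoc, sub_mul _ 1, one_mul]
    refine (hshift.sub ih).congr_fun fun k => ?_
    have hχ : (χ k : ℂ) = χ (-u) * χ (k + u) := by
      rw [← Circle.coe_mul, ← AddChar.map_add_eq_mul, neg_add_eq_sub, add_sub_cancel_right]
    rw [Function.iterate_succ_apply', fwdDiff, Function.comp_apply, Equiv.coe_addRight, hχ]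
    ring

/-- The sum of the series `∑ f k χ(k)` after `M` summations by parts in the direction `u`. It makes
sense as soon as the differences `(fwdDiff u)^[M] f` are summable and `χ u ≠ 1`. -/
def sumByParts (u : Γ) (χ : AddChar Γ Circle) (M : ℕ) (f : Γ → ℂ) : ℂ :=
  (((χ (-u) : ℂ) - 1) ^ M)⁻¹ * ∑' k, (fwdDiff u)^[M] f k * χ k

variable {u : Γ} {χ : AddChar Γ Circle} {M : ℕ} {g : Γ → ℝ}

theorem norm_addChar_neg_sub_one (χ : AddChar Γ Circle) (u : Γ) :
    ‖(χ (-u) : ℂ) - 1‖ = ‖(χ u : ℂ) - 1‖ := by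
  rw [AddChar.map_neg_eq_inv, Circle.coe_inv_eq_conj, ← Complex.norm_conj, map_sub, map_one,
    Complex.conj_conj]

theorem hasSum_sumByParts (hχ : χ u ≠ 1) {f : Γ → ℂ} (hf : Summable f) :
    HasSum (fun k => f k * χ k) (sumByParts u χ M f) := by
  have hsum : Summable fun k => f k * χ k := by
    refine .of_norm (hf.norm.congr fun k => ?_)
    rw [norm_mul, Circle.norm_coe, mul_one]
  have hne : (χ (-u) : ℂ) - 1 ≠ 0 := by
    rw [← norm_ne_zero_iff, norm_addChar_neg_sub_one, norm_ne_zero_iff, sub_ne_zero]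
    exact fun h => hχ (Circle.coe_eq_one.1 h)
  rw [sumByParts, (hasSum_fwdDiff_iter_mul_addChar hsum.hasSum u M).tsum_eq,
    inv_mul_cancel_left₀ (pow_ne_zero _ hne)]
  exact hsum.hasSum

theorem norm_sumByParts_le {f : Γ → ℂ} (hg : Summable g)
    (hfg : ∀ k, ‖(fwdDiff u)^[M] f k‖ ≤ g k) :
    ‖sumByParts u χ M f‖ ≤ (‖(χ u : ℂ) - 1‖ ^ M)⁻¹ * ∑' k, g k := by
  rw [sumByParts, norm_mul, norm_inv, norm_pow, norm_addChar_neg_sub_one]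
  gcongr
  exact tsum_of_norm_bounded hg.hasSum fun k => by
    simpa only [norm_mul, Circle.norm_coe, mul_one] using hfg k

theorem differentiableOn_fwdDiff_iter {f : ℂ → Γ → ℂ} {U : Set ℂ}
    (hf : ∀ k, DifferentiableOn ℂ (fun s => f s k) U) (u : Γ) (j : ℕ) (k : Γ) :
    DifferentiableOn ℂ (fun s => (fwdDiff u)^[j] (f s) k) U := by
  induction j generalizing k with
  | zero => exact hf k
  | succ j ih =>
    simp only [Function.iterate_succ_apply', fwdDiff]
    exact (ih _).sub (ih k)

theorem differentiableOn_sumByParts {f : ℂ → Γ → ℂ} {U : Set ℂ} {B : ℂ → ℝ} (hU : IsOpen U)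
    (hf : ∀ k, DifferentiableOn ℂ (fun s => f s k) U) (hB : ContinuousOn B U) (hg : Summable g)
    (hfg : ∀ s ∈ U, ∀ k, ‖(fwdDiff u)^[M] (f s) k‖ ≤ B s * g k) :
    DifferentiableOn ℂ (fun s => sumByParts u χ M (f s)) U := by
  have hterm (k : Γ) : DifferentiableOn ℂ (fun s => (fwdDiff u)^[M] (f s) k * χ k) U :=
    (differentiableOn_fwdDiff_iter hf u M k).mul_const _
  refine DifferentiableOn.const_mul (SummableLocallyUniformlyOn.differentiableOn hU ?_
    fun k s hs => (hterm k).differentiableAt (hU.mem_nhds hs)) _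
  refine SummableLocallyUniformlyOn_of_locally_bounded hU fun K hKU hK => ?_
  obtain ⟨b, hb⟩ := hK.bddAbove_image (hB.mono hKU).abs
  refine ⟨fun k => b * ‖g k‖, hg.norm.mul_left b, fun k s hs => ?_⟩
  have hbs : |B s| ≤ b := hb (Set.mem_image_of_mem _ hs)
  calc ‖(fwdDiff u)^[M] (f s) k * χ k‖ = ‖(fwdDiff u)^[M] (f s) k‖ := by
        rw [norm_mul, Circle.norm_coe, mul_one]
    _ ≤ B s * g k := hfg s (hKU hs) k
    _ ≤ |B s| * ‖g k‖ := (le_abs_self _).trans (abs_mul _ _).le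
    _ ≤ b * ‖g k‖ := by gcongr

end SummationByParts

section Lattice

theorem summable_norm_sum_zsmul_rpow {ι E : Type*} [Fintype ι] [NormedAddCommGroup E]
    [NormedSpace ℝ E] (b : Module.Basis ι ℝ E) {p : ℝ} (hp : p < -Fintype.card ι) :
    Summable fun k : ι → ℤ => ‖∑ i, k i • b i‖ ^ p := by
  have := b.finiteDimensional_of_finite
  let e := (b.restrictScalars ℤ).equivFun
  have hrank : Module.finrank ℤ (Submodule.span ℤ (Set.range b)) = Fintype.card ι :=
    Module.finrank_eq_card_basis (b.restrictScalars ℤ)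
  refine ((ZLattice.summable_norm_rpow (Submodule.span ℤ (Set.range b)) p
    (by rwa [hrank])).comp_injective e.symm.injective).congr fun k => ?_
  simp [e, Module.Basis.equivFun_symm_apply]

open scoped RealInnerProductSpace in
theorem norm_two_mul_inner_add_sq_le {V : Type*} [NormedAddCommGroup V] [InnerProductSpace ℝ V]
    {x y : V} {z : ℂ} {θ : ℝ} (hθ₀ : 0 ≤ θ) (hθ₁ : θ ≤ 1) (hz : ‖z‖ * ‖y‖ ≤ θ * ‖x‖ / 4) :
    ‖2 * z * (⟪x, y⟫ : ℝ) + z ^ 2 * (‖y‖ ^ 2 : ℝ)‖ ≤ θ * ‖x‖ ^ 2 := by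
  have hinner : ‖z‖ * ‖⟪x, y⟫‖ ≤ ‖z‖ * (‖x‖ * ‖y‖) :=
    mul_le_mul_of_nonneg_left (norm_inner_le_norm x y) (norm_nonneg z)
  calc ‖2 * z * (⟪x, y⟫ : ℝ) + z ^ 2 * (‖y‖ ^ 2 : ℝ)‖
      ≤ 2 * ‖z‖ * ‖⟪x, y⟫‖ + ‖z‖ ^ 2 * ‖y‖ ^ 2 := by
        refine (norm_add_le _ _).trans_eq ?_
        simp only [norm_mul, norm_pow, Complex.norm_real, Complex.norm_ofNat, norm_norm]
    _ ≤ 2 * (‖z‖ * ‖y‖) * ‖x‖ + (‖z‖ * ‖y‖) ^ 2 := by linarith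
    _ ≤ 2 * (θ * ‖x‖ / 4) * ‖x‖ + (θ * ‖x‖ / 4) ^ 2 := by gcongr
    _ ≤ θ * ‖x‖ ^ 2 := by
      nlinarith [mul_nonneg (mul_nonneg hθ₀ (sub_nonneg.2 hθ₁)) (sq_nonneg ‖x‖), sq_nonneg ‖x‖]

variable {n : ℕ}

/-- The lattice `ℤⁿ` inside Euclidean space. -/
def latticePoint : (Fin n → ℤ) →+ EuclideanSpace ℝ (Fin n) where
  toFun k := WithLp.toLp 2 fun i => (k i : ℝ)
  map_zero' := by ext; simp
  map_add' k l := by ext; simp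

@[simp] theorem latticePoint_apply (k : Fin n → ℤ) (i : Fin n) : latticePoint k i = k i := rfl

theorem norm_latticePoint_sq (k : Fin n → ℤ) : ‖latticePoint k‖ ^ 2 = ∑ i, (k i : ℝ) ^ 2 := by
  simp [EuclideanSpace.norm_sq_eq]

theorem norm_latticePoint (k : Fin n → ℤ) : ‖latticePoint k‖ = znorm k := by
  rw [znorm, ← norm_latticePoint_sq, Real.sqrt_sq (norm_nonneg _)]

theorem abs_apply_le_norm_latticePoint (k : Fin n → ℤ) (i : Fin n) :
    |(k i : ℝ)| ≤ ‖latticePoint k‖ :=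
  PiLp.norm_apply_le (latticePoint k) i

theorem one_le_norm_latticePoint {k : Fin n → ℤ} (hk : k ≠ 0) : 1 ≤ ‖latticePoint k‖ := by
  obtain ⟨i, hi⟩ := Function.ne_iff.1 hk
  exact (by exact_mod_cast Int.one_le_abs hi : (1 : ℝ) ≤ |(k i : ℝ)|).trans
    (abs_apply_le_norm_latticePoint k i)

theorem summable_norm_latticePoint_rpow {p : ℝ} (hp : p < -n) :
    Summable fun k : Fin n → ℤ => ‖latticePoint k‖ ^ p := by
  let b := (EuclideanSpace.basisFun (Fin n) ℝ).toBasis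
  have hsum (k : Fin n → ℤ) : latticePoint k = ∑ i, k i • b i := by
    ext j
    simp [b, Pi.single_apply]
  simpa only [hsum] using summable_norm_sum_zsmul_rpow b (by rwa [Fintype.card_fin])

/-- The weight `1 + |k|` on `ℤⁿ`, in which the size of symbols is measured. -/
def weight (k : Fin n → ℤ) : ℝ := 1 + ‖latticePoint k‖

theorem one_le_weight (k : Fin n → ℤ) : 1 ≤ weight k := le_add_of_nonneg_right (norm_nonneg _)

theorem weight_pos (k : Fin n → ℤ) : 0 < weight k := one_pos.trans_le (one_le_weight k)

theorem norm_latticePoint_le_weight (k : Fin n → ℤ) : ‖latticePoint k‖ ≤ weight k :=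
  le_add_of_nonneg_left zero_le_one

theorem weight_zero : weight (0 : Fin n → ℤ) = 1 := by simp [weight]

theorem weight_le_two_mul_norm {k : Fin n → ℤ} (hk : k ≠ 0) :
    weight k ≤ 2 * ‖latticePoint k‖ := by
  rw [weight]
  linarith [one_le_norm_latticePoint hk]

theorem weight_add_le (k u : Fin n → ℤ) : weight (k + u) ≤ weight u * weight k := by
  simp only [weight, map_add]
  nlinarith [norm_add_le (latticePoint k) (latticePoint u), norm_nonneg (latticePoint k),
    norm_nonneg (latticePoint u)]

theorem summable_weight_rpow {p : ℝ} (hp : p < -n) :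
    Summable fun k : Fin n → ℤ => weight k ^ p := by
  refine (summable_norm_latticePoint_rpow hp).of_norm_bounded_eventually ?_
  filter_upwards [(Set.finite_singleton (0 : Fin n → ℤ)).compl_mem_cofinite] with k hk
  have hk1 := one_le_norm_latticePoint hk
  have hp0 : p ≤ 0 := hp.le.trans (by simp)
  rw [Real.norm_of_nonneg (Real.rpow_nonneg (weight_pos k).le _)]
  exact Real.rpow_le_rpow_of_nonpos (by linarith) (norm_latticePoint_le_weight k) hp0

theorem add_nsmul_ne_zero {k : Fin n → ℤ} (hk : k ≠ 0) (u : Fin n → ℤ) {m : ℕ}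
    (hm : (m : ℝ) < weight k / (2 * weight u)) : k + m • u ≠ 0 := by
  intro h
  have hnorm : ‖latticePoint k‖ = m * ‖latticePoint u‖ := by
    rw [eq_neg_of_add_eq_zero_left h, map_neg, norm_neg, map_nsmul, RCLike.norm_nsmul ℝ,
      nsmul_eq_mul]
  rw [lt_div_iff₀ (mul_pos two_pos (weight_pos u))] at hm
  nlinarith [weight_le_two_mul_norm hk, norm_latticePoint_le_weight u, m.cast_nonneg (α := ℝ)]

/-- The quadratic form `|k|² + ε`, with its value at the origin replaced by `1`. For `ε = 1` this
changes nothing; for `ε = 0` it makes the form positive without affecting a sum over `k ≠ 0`. -/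
def shiftedNormSq (ε : ℝ) (k : Fin n → ℤ) : ℝ := if k = 0 then 1 else ‖latticePoint k‖ ^ 2 + ε

theorem shiftedNormSq_of_ne_zero (ε : ℝ) {k : Fin n → ℤ} (hk : k ≠ 0) :
    shiftedNormSq ε k = ‖latticePoint k‖ ^ 2 + ε :=
  if_neg hk

theorem shiftedNormSq_one (k : Fin n → ℤ) :
    shiftedNormSq 1 k = ∑ i, (k i : ℝ) ^ 2 + 1 := by
  rw [← norm_latticePoint_sq]
  rcases eq_or_ne k 0 with rfl | hk
  · simp [shiftedNormSq]
  · exact shiftedNormSq_of_ne_zero 1 hk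

variable {ε : ℝ}

theorem one_le_shiftedNormSq (hε : 0 ≤ ε) (k : Fin n → ℤ) : 1 ≤ shiftedNormSq ε k := by
  rw [shiftedNormSq]
  split_ifs with hk
  · exact le_rfl
  · nlinarith [one_le_norm_latticePoint hk]

theorem shiftedNormSq_pos (hε : 0 ≤ ε) (k : Fin n → ℤ) : 0 < shiftedNormSq ε k :=
  one_pos.trans_le (one_le_shiftedNormSq hε k)

theorem shiftedNormSq_le_weight_sq (hε : ε ≤ 1) (k : Fin n → ℤ) :
    shiftedNormSq ε k ≤ weight k ^ 2 := by
  rw [shiftedNormSq]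
  split_ifs with hk
  · exact one_le_pow₀ (one_le_weight k)
  · rw [weight]
    nlinarith [norm_nonneg (latticePoint k)]

theorem weight_sq_le_shiftedNormSq (hε : 0 ≤ ε) (k : Fin n → ℤ) :
    weight k ^ 2 / 4 ≤ shiftedNormSq ε k := by
  rw [shiftedNormSq]
  split_ifs with hk
  · norm_num [hk, weight_zero]
  · nlinarith [weight_le_two_mul_norm hk, weight_pos k]

theorem shiftedNormSq_rpow_le (hε : ε ∈ Set.Icc 0 1) (t : ℝ) (k : Fin n → ℤ) :
    shiftedNormSq ε k ^ t ≤ 4 ^ |t| * weight k ^ (2 * t) := by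
  have hw : (weight k ^ 2) ^ t = weight k ^ (2 * t) := by
    rw [← Real.rpow_natCast_mul (weight_pos k).le, Nat.cast_ofNat]
  rcases le_or_gt 0 t with ht | ht
  · rw [← hw]
    refine (Real.rpow_le_rpow (shiftedNormSq_pos hε.1 k).le
      (shiftedNormSq_le_weight_sq hε.2 k) ht).trans ?_
    exact le_mul_of_one_le_left (by positivity)
      (Real.one_le_rpow (by norm_num) (abs_nonneg t))
  · have hpos : 0 < weight k ^ 2 / 4 := by have := weight_pos k; positivity
    refine (Real.rpow_le_rpow_of_nonpos hpos
      (weight_sq_le_shiftedNormSq hε.1 k) ht.le).trans_eq ?_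
    rw [Real.div_rpow (by positivity) (by norm_num), hw, abs_of_neg ht,
      Real.rpow_neg (by norm_num), div_eq_inv_mul]

open scoped RealInnerProductSpace in
theorem holomorphicAlong_shiftedNormSq_ratio (hε : 0 ≤ ε) (u k : Fin n → ℤ) {θ : ℝ}
    (hθ₀ : 0 ≤ θ) (hθ₁ : θ ≤ 1) :
    HolomorphicAlong u (fun l => ((shiftedNormSq ε l / shiftedNormSq ε k - 1 : ℝ) : ℂ)) k
      (θ * weight k / (8 * weight u)) θ := by
  have hu := one_le_weight u
  have hq := shiftedNormSq_pos hε k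
  rcases eq_or_ne k 0 with rfl | hk
  · refine .of_radius_le_one ?_ (by simpa [hq.ne'] using hθ₀)
    rw [weight_zero, div_le_one (by positivity)]
    linarith
  have hwk := weight_le_two_mul_norm hk
  set x := latticePoint k with hx
  set y := latticePoint u with hy
  refine ⟨fun z => (2 * z * (⟪x, y⟫ : ℝ) + z ^ 2 * (‖y‖ ^ 2 : ℝ)) / shiftedNormSq ε k,
    by fun_prop, fun z hz => ?_, fun m hm => ?_⟩
  · have hzy : ‖z‖ * ‖y‖ ≤ θ * ‖x‖ / 4 := by
      have hz' := (lt_div_iff₀ (by positivity)).1 (mem_ball_zero_iff.1 hz)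
      nlinarith [norm_nonneg z, norm_latticePoint_le_weight u]
    rw [norm_div, Complex.norm_real, Real.norm_of_nonneg hq.le, div_le_iff₀ hq,
      shiftedNormSq_of_ne_zero ε hk]
    linarith [norm_two_mul_inner_add_sq_le hθ₀ hθ₁ hzy, mul_nonneg hθ₀ hε]
  · have hne : k + m • u ≠ 0 := add_nsmul_ne_zero hk u <| hm.trans_le <|
      div_le_div₀ (weight_pos k).le (mul_le_of_le_one_left (weight_pos k).le hθ₁)
        (by positivity) (by linarith)
    have hexpand : shiftedNormSq ε (k + m • u) =
        2 * m * ⟪x, y⟫ + (m : ℝ) ^ 2 * ‖y‖ ^ 2 + shiftedNormSq ε k := by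
      rw [shiftedNormSq_of_ne_zero ε hne, shiftedNormSq_of_ne_zero ε hk, map_add, map_nsmul,
        ← hx, ← hy, ← Nat.cast_smul_eq_nsmul ℝ, norm_add_sq_real, inner_smul_right, norm_smul,
        Real.norm_natCast]
      ring
    have hratio : shiftedNormSq ε (k + m • u) / shiftedNormSq ε k - 1 =
        (2 * m * ⟪x, y⟫ + (m : ℝ) ^ 2 * ‖y‖ ^ 2) / shiftedNormSq ε k := by
      rw [hexpand, add_div, div_self hq.ne', add_sub_cancel_right]
    beta_reduce
    rw [hratio]
    push_cast
    rfl

theorem holomorphicAlong_shiftedNormSq_cpow (hε : 0 ≤ ε) (u k : Fin n → ℤ) (w : ℂ) :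
    HolomorphicAlong u (fun l => (shiftedNormSq ε l : ℂ) ^ w) k
      (weight k / (16 * weight u * (1 + ‖w‖))) (shiftedNormSq ε k ^ w.re * Real.exp 1) := by
  have hθ : 1 / (2 * (1 + ‖w‖)) ≤ 1 / 2 := by
    gcongr
    linarith [norm_nonneg w]
  refine (HolomorphicAlong.ofReal_cpow (shiftedNormSq_pos hε) hθ
    (holomorphicAlong_shiftedNormSq_ratio hε u k (by positivity) (by linarith)) w).mono ?_ ?_
  · rw [one_div_mul_eq_div, div_div]
    exact le_of_eq (by ring)
  · have := (shiftedNormSq_pos hε k).le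
    gcongr
    rw [mul_one_div, div_le_one (by positivity)]
    linarith

/-- The coefficients `c` on `ℤⁿ` form a symbol of order `d` in the direction `u`: near each `k` they
extend holomorphically along `u` to a disc of radius comparable to `1 + |k|`, with a bound
`O((1 + |k|) ^ d)` there. -/
def IsSymbolAlong (u : Fin n → ℤ) (d : ℝ) (c : (Fin n → ℤ) → ℂ) : Prop :=
  ∃ κ > 0, ∃ K, ∀ k, HolomorphicAlong u c k (κ * weight k) (K * weight k ^ d)

namespace IsSymbolAlong

variable {u : Fin n → ℤ} {d d' : ℝ} {c c' : (Fin n → ℤ) → ℂ}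

theorem exists_norm_le (hc : IsSymbolAlong u d c) : ∃ K, ∀ k, ‖c k‖ ≤ K * weight k ^ d := by
  obtain ⟨κ, hκ, K, hK⟩ := hc
  exact ⟨K, fun k => (hK k).norm_le (mul_pos hκ (weight_pos k))⟩

theorem mul (hc : IsSymbolAlong u d c) (hc' : IsSymbolAlong u d' c') :
    IsSymbolAlong u (d + d') fun k => c k * c' k := by
  obtain ⟨κ, hκ, K, hK⟩ := hc
  obtain ⟨κ', hκ', K', hK'⟩ := hc'
  refine ⟨min κ κ', lt_min hκ hκ', K * K', fun k => ?_⟩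
  have hk := weight_pos k
  rw [Real.rpow_add hk, mul_mul_mul_comm]
  exact ((hK k).mono (by gcongr; exact min_le_left _ _) le_rfl).mul
    ((hK' k).mono (by gcongr; exact min_le_right _ _) le_rfl)

theorem update_zero (hc : IsSymbolAlong u d c) (x : ℂ) :
    IsSymbolAlong u d (Function.update c 0 x) := by
  obtain ⟨κ, hκ, K, hK⟩ := hc
  have hu := one_le_weight u
  refine ⟨min κ (1 / (2 * weight u)), lt_min hκ (by positivity), max K ‖x‖, fun k => ?_⟩
  have hk := weight_pos k
  have hradius : min κ (1 / (2 * weight u)) * weight k ≤ weight k / (2 * weight u) := by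
    rw [div_eq_mul_one_div (weight k), mul_comm (weight k)]
    gcongr
    exact min_le_right _ _
  rcases eq_or_ne k 0 with rfl | hk₀
  · refine .of_radius_le_one (hradius.trans ?_) (by simp [weight_zero])
    rw [weight_zero, div_le_one (by positivity)]
    linarith
  · refine ((hK k).mono (by gcongr; exact min_le_left _ _)
      (by gcongr; exact le_max_left _ _)).congr fun m hm => ?_
    rw [Function.update_of_ne (add_nsmul_ne_zero hk₀ u (hm.trans_le hradius))]

end IsSymbolAlong

theorem isSymbolAlong_shiftedNormSq_cpow {ε : ℝ} (hε : ε ∈ Set.Icc 0 1) (u : Fin n → ℤ) (w : ℂ) :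
    IsSymbolAlong u (2 * w.re) fun k => (shiftedNormSq ε k : ℂ) ^ w := by
  have hu := weight_pos u
  refine ⟨1 / (16 * weight u * (1 + ‖w‖)), by positivity, 4 ^ |w.re| * Real.exp 1, fun k => ?_⟩
  refine (holomorphicAlong_shiftedNormSq_cpow hε.1 u k w).mono
    (one_div_mul_eq_div _ _).le ?_
  rw [mul_right_comm]
  gcongr
  exact shiftedNormSq_rpow_le hε w.re k

theorem norm_eval_le_mul_pow_totalDegree {σ R : Type*} [NormedCommRing R] [NormOneClass R]
    (P : MvPolynomial σ R) {x : σ → R} {B : ℝ} (hB : 1 ≤ B) (hx : ∀ i, ‖x i‖ ≤ B) :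
    ‖MvPolynomial.eval x P‖ ≤ (∑ m ∈ P.support, ‖P.coeff m‖) * B ^ P.totalDegree := by
  rw [MvPolynomial.eval_eq, Finset.sum_mul]
  refine norm_sum_le_of_le _ fun m hm => (norm_mul_le _ _).trans ?_
  gcongr
  calc ‖∏ i ∈ m.support, x i ^ m i‖ ≤ ∏ i ∈ m.support, ‖x i ^ m i‖ := Finset.norm_prod_le _ _
    _ ≤ ∏ i ∈ m.support, B ^ m i := by
      gcongr with i
      exact (norm_pow_le _ _).trans (pow_le_pow_left₀ (norm_nonneg _) (hx i) _)
    _ = B ^ ∑ i ∈ m.support, m i := Finset.prod_pow_eq_pow_sum _ _ _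
    _ ≤ B ^ P.totalDegree := pow_le_pow_right₀ hB (MvPolynomial.le_totalDegree hm)

theorem isSymbolAlong_eval (u : Fin n → ℤ) (P : MvPolynomial (Fin n) ℂ) :
    IsSymbolAlong u P.totalDegree fun k => MvPolynomial.eval (fun i => (k i : ℂ)) P := by
  have hu := one_le_weight u
  refine ⟨1, one_pos, (∑ m ∈ P.support, ‖P.coeff m‖) * (2 * weight u) ^ P.totalDegree,
    fun k => ⟨fun z => MvPolynomial.eval (fun i => (k i + z * u i : ℂ)) P, ?_, fun z hz => ?_,
      fun m _ => ?_⟩⟩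
  · simp only [MvPolynomial.eval_eq]
    fun_prop
  · have hk := one_le_weight k
    have hz' : ‖z‖ ≤ weight k := by simpa using (mem_ball_zero_iff.1 hz).le
    have hcoord (l : Fin n → ℤ) (i : Fin n) : ‖(l i : ℂ)‖ ≤ weight l := by
      rw [Complex.norm_intCast]
      exact (abs_apply_le_norm_latticePoint l i).trans (norm_latticePoint_le_weight l)
    have hpoint (i : Fin n) : ‖(k i + z * u i : ℂ)‖ ≤ 2 * weight u * weight k := by
      calc ‖(k i + z * u i : ℂ)‖ ≤ ‖(k i : ℂ)‖ + ‖z‖ * ‖(u i : ℂ)‖ :=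
            (norm_add_le _ _).trans_eq (by rw [norm_mul])
        _ ≤ weight k + weight k * weight u := by gcongr <;> apply hcoord
        _ ≤ 2 * weight u * weight k := by nlinarith
    rw [Real.rpow_natCast, mul_assoc, ← mul_pow]
    exact norm_eval_le_mul_pow_totalDegree P (by nlinarith) hpoint
  · simp

theorem isSymbolAlong_Gval (u : Fin n → ℤ) (P : MvPolynomial (Fin n) ℂ) (r : ℕ) :
    IsSymbolAlong u (P.totalDegree - r) (Gval P r) := by
  have hpow := isSymbolAlong_shiftedNormSq_cpow (ε := 1) (by simp) u (-((r / 2 : ℝ) : ℂ))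
  convert (isSymbolAlong_eval u P).mul hpow using 1
  · rw [Complex.neg_re, Complex.ofReal_re]
    ring
  · ext k
    rw [Gval, ← shiftedNormSq_one, Complex.cpow_neg,
      Complex.ofReal_cpow (shiftedNormSq_pos zero_le_one k).le, div_eq_mul_inv]

/-- The coefficients of the Dirichlet series `∑ c k / (|k|² + ε) ^ (s / 2)`, with `|k|² + ε` encoded
as `shiftedNormSq ε k`. -/
def dirichletCoeff (ε : ℝ) (c : (Fin n → ℤ) → ℂ) (s : ℂ) (k : Fin n → ℤ) : ℂ :=
  c k * (shiftedNormSq ε k : ℂ) ^ (-(s / 2))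

namespace IsSymbolAlong

variable {u : Fin n → ℤ} {d : ℝ} {c : (Fin n → ℤ) → ℂ} {ε : ℝ}

theorem summable_dirichletCoeff (hc : IsSymbolAlong u d c) (hε : ε ∈ Set.Icc 0 1) {s : ℂ}
    (hs : n + d < s.re) : Summable (dirichletCoeff ε c s) := by
  obtain ⟨K, hK⟩ := (hc.mul (isSymbolAlong_shiftedNormSq_cpow hε u (-(s / 2)))).exists_norm_le
  have hre : d + 2 * (-(s / 2)).re < -n := by
    rw [Complex.neg_re, Complex.div_ofNat_re]
    linarith
  exact ((summable_weight_rpow hre).mul_left K).of_norm_bounded hK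

theorem holomorphicAlong_dirichletCoeff (hc : IsSymbolAlong u d c) (hε : ε ∈ Set.Icc 0 1) {N D : ℝ}
    (hD : d + N ≤ D) :
    ∃ κ > 0, ∃ K ≥ 0, ∀ s : ℂ, -N < s.re → ∀ k, HolomorphicAlong u (dirichletCoeff ε c s) k
      (κ * weight k / (1 + ‖s‖)) (K * weight k ^ D) := by
  obtain ⟨κ, hκ, K, hK⟩ := hc
  have hK₀ : 0 ≤ K := by
    have := (norm_nonneg _).trans ((hK 0).norm_le (mul_pos hκ (weight_pos 0)))
    simpa [weight_zero] using this
  have hu := weight_pos u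
  refine ⟨min κ (1 / (16 * weight u)), lt_min hκ (by positivity), K * (4 ^ |N / 2| * Real.exp 1),
    by positivity, fun s hs k => ?_⟩
  have hk := one_le_weight k
  have hs₀ := norm_nonneg s
  have hq := one_le_shiftedNormSq hε.1 k
  refine (((hK k).mono ?_ le_rfl).mul
    ((holomorphicAlong_shiftedNormSq_cpow hε.1 u k (-(s / 2))).mono ?_ le_rfl)).mono le_rfl ?_
  · refine (div_le_self (by positivity) (by linarith)).trans ?_
    gcongr
    exact min_le_left _ _
  · calc min κ (1 / (16 * weight u)) * weight k / (1 + ‖s‖)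
        ≤ 1 / (16 * weight u) * weight k / (1 + ‖s‖) := by gcongr; exact min_le_right _ _
      _ = weight k / (16 * weight u * (1 + ‖s‖)) := by rw [one_div_mul_eq_div, div_div]
      _ ≤ weight k / (16 * weight u * (1 + ‖-(s / 2)‖)) := by
        rw [norm_neg, norm_div, Complex.norm_ofNat]
        gcongr
        exact half_le_self hs₀
  · have hre : (-(s / 2)).re ≤ N / 2 := by
      rw [Complex.neg_re, Complex.div_ofNat_re]
      linarith
    calc K * weight k ^ d * (shiftedNormSq ε k ^ (-(s / 2)).re * Real.exp 1)
        ≤ K * weight k ^ d * (shiftedNormSq ε k ^ (N / 2) * Real.exp 1) := by gcongr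
      _ ≤ K * weight k ^ d * (4 ^ |N / 2| * weight k ^ (2 * (N / 2)) * Real.exp 1) := by
        gcongr
        exact shiftedNormSq_rpow_le hε _ k
      _ = K * (4 ^ |N / 2| * Real.exp 1) * weight k ^ (d + N) := by
        rw [Real.rpow_add (weight_pos k), mul_div_cancel₀ N two_ne_zero]
        ring
      _ ≤ K * (4 ^ |N / 2| * Real.exp 1) * weight k ^ D := by gcongr

theorem norm_fwdDiff_iter_dirichletCoeff_le (hc : IsSymbolAlong u d c) (hε : ε ∈ Set.Icc 0 1)
    {N D : ℝ} (hD : d + N ≤ D) (hD₀ : 0 ≤ D) (M : ℕ) :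
    ∃ K, ∀ s : ℂ, -N < s.re → ∀ k, ‖(fwdDiff u)^[M] (dirichletCoeff ε c s) k‖ ≤
      K * (1 + ‖s‖) ^ M * weight k ^ (D - M) := by
  obtain ⟨κ, hκ, K, hK₀, hK⟩ := hc.holomorphicAlong_dirichletCoeff hε hD
  refine ⟨K * (2 * (M + 1) * (weight u ^ D + 1) / κ) ^ M, fun s hs k => ?_⟩
  have hradius (l : Fin n → ℤ) : 0 < κ * weight l / (1 + ‖s‖) := by
    have := weight_pos l
    positivity
  have hnorm (l : Fin n → ℤ) := (hK s hs l).norm_le (hradius l)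
  have hgrowth (l : Fin n → ℤ) : K * weight (l + u) ^ D ≤ weight u ^ D * (K * weight l ^ D) := by
    have hl := (weight_pos l).le
    have hu := (weight_pos u).le
    rw [mul_left_comm, ← Real.mul_rpow hu hl]
    gcongr
    · exact (weight_pos _).le
    · exact weight_add_le l u
  refine ((hK s hs k).norm_fwdDiff_iter_le (hradius k)
    (Real.rpow_nonneg (weight_pos u).le D) hnorm hgrowth M).trans_eq ?_
  rw [Real.rpow_sub_natCast (weight_pos k).ne']
  have hk := (weight_pos k).ne'
  simp only [div_pow, mul_pow]
  field_simp

end IsSymbolAlong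

theorem distInt_le_abs_sub_intCast (t : ℝ) (m : ℤ) : distInt t ≤ |t - m| :=
  ciInf_le ⟨0, by rintro _ ⟨m, rfl⟩; positivity⟩ m

theorem four_mul_distInt_le_norm_fourierChar_sub_one (t : ℝ) :
    4 * distInt t ≤ ‖(Real.fourierChar t : ℂ) - 1‖ := by
  set x := t - round t with hx
  have hx₂ : |x| ≤ 1 / 2 := abs_sub_round t
  have hperiod : (Real.fourierChar t : ℂ) = Complex.exp (Complex.I * (2 * Real.pi * x : ℝ)) := by
    rw [Real.fourierChar_apply, Complex.exp_eq_exp_iff_exists_int]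
    refine ⟨round t, ?_⟩
    rw [hx]
    push_cast
    ring
  have hsin : 2 * |x| ≤ |Real.sin (Real.pi * x)| := by
    have := Real.mul_abs_le_abs_sin (x := Real.pi * x) <| by
      rw [abs_mul, abs_of_pos Real.pi_pos]
      nlinarith [Real.pi_pos]
    rwa [abs_mul, abs_of_pos Real.pi_pos, ← mul_assoc, div_mul_cancel₀ _ Real.pi_ne_zero] at this
  calc 4 * distInt t ≤ 2 * |Real.sin (Real.pi * x)| := by
        linarith [distInt_le_abs_sub_intCast t (round t)]
    _ = ‖(Real.fourierChar t : ℂ) - 1‖ := by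
      rw [hperiod, Complex.norm_exp_I_mul_ofReal_sub_one, norm_mul, Real.norm_ofNat,
        Real.norm_eq_abs, mul_assoc, mul_div_cancel_left₀ _ two_ne_zero]

/-- The character `k ↦ exp (2πi k·a)` of `ℤⁿ`. -/
def latticeChar (a : Fin n → ℝ) : AddChar (Fin n → ℤ) Circle :=
  Real.fourierChar.compAddMonoidHom
    { toFun k := ∑ i, (k i : ℝ) * a i
      map_zero' := by simp
      map_add' k l := by simp [add_mul, Finset.sum_add_distrib] }

theorem latticeChar_apply (a : Fin n → ℝ) (k : Fin n → ℤ) :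
    latticeChar a k = Real.fourierChar (∑ i, (k i : ℝ) * a i) :=
  rfl

theorem coe_latticeChar (a : Fin n → ℝ) (k : Fin n → ℤ) :
    (latticeChar a k : ℂ) =
      Complex.exp (2 * (Real.pi : ℂ) * Complex.I * ((∑ i, (k i : ℝ) * a i : ℝ) : ℂ)) := by
  rw [latticeChar_apply, Real.fourierChar_apply]
  congr 1
  push_cast
  ring

theorem four_mul_distInt_le_norm_latticeChar_sub_one (a : Fin n → ℝ) (u : Fin n → ℤ) :
    4 * distInt (∑ i, a i * (u i : ℝ)) ≤ ‖(latticeChar a u : ℂ) - 1‖ := by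
  rw [latticeChar_apply]
  simp only [mul_comm (u _ : ℝ)]
  exact four_mul_distInt_le_norm_fourierChar_sub_one _

/-- The series `∑ k, F a s k` converge for `σ < re s` and continue holomorphically to `-N < re s`,
with a bound polynomial in `1 + |s|` and in the inverse of the distance of `a·u` to `ℤ`, uniformly
in `a`. -/
def HasEffectiveContinuation (u : Fin n → ℤ) (N σ : ℝ)
    (F : (Fin n → ℝ) → ℂ → (Fin n → ℤ) → ℂ) : Prop :=
  ∃ C > (0 : ℝ), ∃ B > (0 : ℝ), ∃ A > (0 : ℝ), ∀ a, 0 < distInt (∑ i, a i * (u i : ℝ)) →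
    ∃ g : ℂ → ℂ, DifferentiableOn ℂ g {s | -N < s.re} ∧
      (∀ s : ℂ, σ < s.re → -N < s.re → HasSum (F a s) (g s)) ∧
      ∀ s : ℂ, -N < s.re → ‖g s‖ ≤ C * (1 + ‖s‖) ^ B * distInt (∑ i, a i * (u i : ℝ)) ^ (-A)

theorem differentiable_dirichletCoeff {ε : ℝ} (hε : 0 ≤ ε) (c : (Fin n → ℤ) → ℂ)
    (k : Fin n → ℤ) : Differentiable ℂ fun s => dirichletCoeff ε c s k := by
  have hq : (shiftedNormSq ε k : ℂ) ≠ 0 := by exact_mod_cast (shiftedNormSq_pos hε k).ne'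
  exact .const_mul (.const_cpow (by fun_prop) (.inl hq)) _

theorem IsSymbolAlong.hasEffectiveContinuation {u : Fin n → ℤ} {d ε : ℝ} {c : (Fin n → ℤ) → ℂ}
    (hc : IsSymbolAlong u d c) (hε : ε ∈ Set.Icc 0 1) (N : ℝ) :
    HasEffectiveContinuation u N (n + d) fun a s k => dirichletCoeff ε c s k * latticeChar a k := by
  let D := max (d + N) 0
  let M := ⌊D + n⌋₊ + 1
  have hM : D - M < -n := by
    have := Nat.lt_floor_add_one (D + n)
    push_cast [M]
    linarith
  have hMpos : (0 : ℝ) < M := by positivity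
  obtain ⟨K, hK⟩ := hc.norm_fwdDiff_iter_dirichletCoeff_le hε (le_max_left (d + N) 0)
    (le_max_right _ _) M
  have hsum := summable_weight_rpow hM
  let T := ∑' k : Fin n → ℤ, weight k ^ (D - M)
  refine ⟨|K * T| + 1, by positivity, M, hMpos, M, hMpos, fun a ha => ?_⟩
  have hdist : distInt (∑ i, a i * (u i : ℝ)) ≤ ‖(latticeChar a u : ℂ) - 1‖ := by
    linarith [four_mul_distInt_le_norm_latticeChar_sub_one a u]
  have hχ : latticeChar a u ≠ 1 := fun h => ha.not_ge (by simpa [h] using hdist)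
  refine ⟨fun s => sumByParts u (latticeChar a) M (dirichletCoeff ε c s), ?_,
    fun s hs _ => hasSum_sumByParts hχ (hc.summable_dirichletCoeff hε hs), fun s hs => ?_⟩
  · exact differentiableOn_sumByParts (isOpen_lt continuous_const Complex.continuous_re)
      (fun k => (differentiable_dirichletCoeff hε.1 c k).differentiableOn)
      (by fun_prop) hsum hK
  · rw [Real.rpow_natCast, Real.rpow_neg ha.le, Real.rpow_natCast]
    refine (norm_sumByParts_le (hsum.mul_left _) (hK s hs)).trans ?_
    rw [tsum_mul_left, mul_right_comm K, mul_comm]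
    gcongr
    linarith [le_abs_self (K * T)]

theorem ofReal_sq_cpow_neg_half {x : ℝ} (hx : 0 ≤ x) (s : ℂ) :
    ((x ^ 2 : ℝ) : ℂ) ^ (-(s / 2)) = ((x : ℂ) ^ s)⁻¹ := by
  have harg : (x : ℂ).arg = 0 := Complex.arg_ofReal_of_nonneg hx
  rw [Complex.cpow_neg, Complex.ofReal_pow, ← Complex.cpow_nat_mul', Nat.cast_ofNat,
    mul_div_cancel₀ s two_ne_zero] <;> simp [harg, Real.pi_pos, Real.pi_pos.le]

theorem F0Term_eq_dirichletCoeff_mul_latticeChar (P : MvPolynomial (Fin n) ℂ) (r : ℕ) :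
    F0Term P r = fun a s k =>
      dirichletCoeff 0 (Function.update (Gval P r) 0 0) s k * latticeChar a k := by
  ext a s k
  rcases eq_or_ne k 0 with rfl | hk
  · simp [F0Term, dirichletCoeff]
  · rw [F0Term, if_neg hk, coe_latticeChar, dirichletCoeff, Function.update_of_ne hk,
      shiftedNormSq_of_ne_zero 0 hk, add_zero, ofReal_sq_cpow_neg_half (norm_nonneg _),
      norm_latticePoint, div_eq_mul_inv]

theorem F1Term_eq_dirichletCoeff_mul_latticeChar (P : MvPolynomial (Fin n) ℂ) (r : ℕ) :
    F1Term P r = fun a s k => dirichletCoeff 1 (Gval P r) s k * latticeChar a k := by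
  ext a s k
  rw [F1Term, coe_latticeChar, dirichletCoeff, shiftedNormSq_one, Complex.cpow_neg,
    div_eq_mul_inv]

end Lattice

/-- **Lemma.** Let `G = P/(X₁²+⋯+Xₙ²+1)^{r/2}` and `u ∈ ℤⁿ`.  For every `N ∈ ℕ` and
`i ∈ {0,1}` there are positive constants `Cᵢ, Bᵢ, Aᵢ` depending only on `G`, `N`, `u`
(not on `a`!) such that, for every `a ∈ ℝⁿ` with `d(a·u, ℤ) > 0`, the function
`s ↦ Fᵢ(G;a;s)` extends holomorphically to `{Re s > −N}` where it satisfies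
`|Fᵢ(G;a;s)| ≤ Cᵢ (1+|s|)^{Bᵢ} d(a·u, ℤ)^{−Aᵢ}`. -/
theorem Fi_effective_bound (n : ℕ) (hn : 0 < n) (P : MvPolynomial (Fin n) ℂ) (r : ℕ)
    (u : Fin n → ℤ) (N : ℕ) (hN : 0 < N) :
    ∃ C₀ > (0:ℝ), ∃ B₀ > (0:ℝ), ∃ A₀ > (0:ℝ), ∃ C₁ > (0:ℝ), ∃ B₁ > (0:ℝ), ∃ A₁ > (0:ℝ),
      ∀ a : Fin n → ℝ, 0 < distInt (∑ i, a i * (u i : ℝ)) →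
        (∃ g₀ : ℂ → ℂ,
          DifferentiableOn ℂ g₀ {s : ℂ | -(N : ℝ) < s.re} ∧
          (∀ s : ℂ, (n : ℝ) + (P.totalDegree : ℝ) - (r : ℝ) < s.re → -(N : ℝ) < s.re →
            HasSum (F0Term P r a s) (g₀ s)) ∧
          (∀ s : ℂ, -(N : ℝ) < s.re →
            ‖g₀ s‖ ≤ C₀ * (1 + ‖s‖) ^ B₀ * distInt (∑ i, a i * (u i : ℝ)) ^ (-A₀))) ∧
        (∃ g₁ : ℂ → ℂ,
          DifferentiableOn ℂ g₁ {s : ℂ | -(N : ℝ) < s.re} ∧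
          (∀ s : ℂ, (n : ℝ) + (P.totalDegree : ℝ) - (r : ℝ) < s.re → -(N : ℝ) < s.re →
            HasSum (F1Term P r a s) (g₁ s)) ∧
          (∀ s : ℂ, -(N : ℝ) < s.re →
            ‖g₁ s‖ ≤ C₁ * (1 + ‖s‖) ^ B₁ * distInt (∑ i, a i * (u i : ℝ)) ^ (-A₁))) := by
  have hG := isSymbolAlong_Gval u P r
  have h₀ := (hG.update_zero 0).hasEffectiveContinuation (ε := 0) (by simp) N
  have h₁ := hG.hasEffectiveContinuation (ε := 1) (by simp) N
  rw [← F0Term_eq_dirichletCoeff_mul_latticeChar, ← add_sub_assoc] at h₀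
  rw [← F1Term_eq_dirichletCoeff_mul_latticeChar, ← add_sub_assoc] at h₁
  obtain ⟨C₀, hC₀, B₀, hB₀, A₀, hA₀, h₀⟩ := h₀
  obtain ⟨C₁, hC₁, B₁, hB₁, A₁, hA₁, h₁⟩ := h₁
  exact ⟨C₀, hC₀, B₀, hB₀, A₀, hA₀, C₁, hC₁, B₁, hB₁, A₁, hA₁, fun a ha => ⟨h₀ a ha, h₁ a ha⟩⟩

end
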